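/- For any integers m ≥ 2 and n ≥ 1, the sum over all complete m-ary trees T with n internal vertices of the product over all internal vertices v of T of (x + 1/𝓗_v) equals ((x+1)/n!) · ∏_{i=1}^{n-1} ((mn+1-i)(x+1) − (m−1)i), as an identity of polynomials in x over ℚ. -/

import Mathlib

/-!
Let `G` be the generating function of complete `(k + 1)`-ary trees, each weighted by the product of
`f (𝓗_v)`, where `h * f h = (h - 1) * x + y`; the weight `x + c / h` is the case `y = x + c`.
The hook length of the root only sees its first `k` subtrees, so `G = 1 + z * B * G` with
`[zⁿ] B = f (n + 1) * [zⁿ] Gᵏ`. Differentiating `z * B` clears the denominators of `f`, which gives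
the differential equation `D G = G² * D (z * B) = G² * (y * Gᵏ + x * z * D (Gᵏ))` for `D = d/dz`.
Multiplied by `r * Gʳ⁻¹`, its right-hand side becomes a combination of `Gᵏ⁺¹⁺ʳ` and
`z * D (Gᵏ⁺¹⁺ʳ)`, so `[zⁿ⁺¹] Gʳ` is an explicit multiple of `[zⁿ] Gᵏ⁺¹⁺ʳ`. The closed form for
`[zⁿ] Gʳ` follows by induction on `n` for all `r` simultaneously, and `r = 1` counts trees.
-/

open Polynomial Finset

/-- A complete `m`-ary tree: a `leaf` is an external vertex and a `node`
has exactly `m` linearly ordered subtrees. -/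
inductive MTree (m : ℕ) : Type
  | leaf : MTree m
  | node : (Fin m → MTree m) → MTree m

namespace MTree

/-- The number of internal vertices of a complete `m`-ary tree. -/
def internals {m : ℕ} : MTree m → ℕ
  | leaf => 0
  | node c => 1 + ∑ i, (c i).internals

/-- The first kind of hook length of the root of `node c`: one plus the number of
internal vertices of all subtrees except the rightmost one. -/
def hook1 {m : ℕ} (c : Fin m → MTree m) : ℕ :=
  1 + ∑ i ∈ Finset.univ.filter (fun i : Fin m => (i : ℕ) + 1 < m), (c i).internals

/-- The product of `f (𝓗_v)` over all internal vertices `v` of a complete `m`-ary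
tree, where `𝓗_v` is the first kind of hook length. -/
def hookProd1 {m : ℕ} {R : Type*} [CommSemiring R] (f : ℕ → R) : MTree m → R
  | leaf => 1
  | node c => f (hook1 c) * ∏ i, hookProd1 f (c i)

/-- The number of internal vertices of the `(m+1-|S|)`-ary tree `T^S` obtained from a
complete `(m+1)`-ary tree `T` by recursively deleting, for every `r ∈ S ⊆ [m]`,
the `r`-th subtree of every remaining internal vertex (the label `r ∈ {1,…,m}`
corresponds to the child with index `r - 1`, i.e. to `Fin.castSucc` of `Fin m`). -/
def internalsS {m : ℕ} (S : Finset (Fin m)) : MTree (m + 1) → ℕ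
  | leaf => 0
  | node c => 1 + ∑ i ∈ (S.image Fin.castSucc)ᶜ, internalsS S (c i)

/-- The product of `f (ℍ_v^S)` over all internal vertices `v` of a complete
`(m+1)`-ary tree, where `ℍ_v^S` is the second kind of hook length. -/
def hookProdS {m : ℕ} {R : Type*} [CommSemiring R] (S : Finset (Fin m)) (f : ℕ → R) :
    MTree (m + 1) → R
  | leaf => 1
  | node c => f (internalsS S (node c)) * ∏ i, hookProdS S f (c i)

end MTree

open scoped PowerSeries

section Northcott

variable {α β ι M : Type*}

theorem finite_setOf_eq_of_northcott [Preorder M] (s : α → M) [Northcott s] (b : M) :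
    {a | s a = b}.Finite :=
  (Northcott.finite_le b).subset fun _ ha => le_of_eq ha

variable [AddCommMonoid M] [PartialOrder M] [CanonicallyOrderedAdd M]

theorem northcott_add (s : α → M) (t : β → M) [Northcott s] [Northcott t] :
    Northcott fun p : α × β => s p.1 + t p.2 where
  finite_le b := ((Northcott.finite_le (h := s) b).prod (Northcott.finite_le (h := t) b)).subset
    fun _ hp => ⟨le_self_add.trans hp, le_add_self.trans hp⟩

theorem northcott_sum [IsOrderedAddMonoid M] [Fintype ι] (s : α → M) [Northcott s] :
    Northcott fun c : ι → α => ∑ i, s (c i) where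
  finite_le b := (Set.Finite.pi fun _ => Northcott.finite_le (h := s) b).subset fun c hc i _ =>
    (single_le_sum_of_canonicallyOrdered (f := fun i => s (c i)) (mem_univ i)).trans hc

end Northcott

section WeightedGenFun

variable {α β R : Type*} [CommSemiring R]

/-- The ordinary generating function `∑ₐ w a * X ^ s a` of a combinatorial class `α` with size
function `s` and weight function `w`. The coefficients are sums over the fibres of `s`, which are
meaningful when these fibres are finite; this is ensured by `Northcott s`. -/
noncomputable def weightedGenFun (s : α → ℕ) (w : α → R) : R⟦X⟧ :=
  PowerSeries.mk fun n => ∑ᶠ a ∈ {a | s a = n}, w a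

theorem weightedGenFun_comp_equiv (e : α ≃ β) (s : β → ℕ) (w : β → R) :
    weightedGenFun (fun a => s (e a)) (fun a => w (e a)) = weightedGenFun s w := by
  ext n
  simp only [weightedGenFun, PowerSeries.coeff_mk]
  exact finsum_comp_equiv e (f := fun b => ∑ᶠ _ : b ∈ {b | s b = n}, w b)

theorem coeff_weightedGenFun (s : α → ℕ) [Northcott s] (w : α → R) (n : ℕ) :
    PowerSeries.coeff n (weightedGenFun s w) =
      ∑ a ∈ (finite_setOf_eq_of_northcott s n).toFinset, w a := by
  rw [weightedGenFun, PowerSeries.coeff_mk, finsum_mem_eq_finite_toFinset_sum]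

theorem weightedGenFun_comp_size_mul (s : α → ℕ) [Northcott s] (g : ℕ → R) (w : α → R) :
    weightedGenFun s (fun a => g (s a) * w a) =
      PowerSeries.mk fun n => g n * PowerSeries.coeff n (weightedGenFun s w) := by
  ext n
  rw [PowerSeries.coeff_mk, coeff_weightedGenFun, coeff_weightedGenFun, mul_sum]
  refine sum_congr rfl fun a ha => ?_
  rw [(Set.Finite.mem_toFinset _).1 ha]

theorem weightedGenFun_prod (s : α → ℕ) (t : β → ℕ) [Northcott s] [Northcott t]
    (v : α → R) (w : β → R) :
    weightedGenFun (fun p : α × β => s p.1 + t p.2) (fun p => v p.1 * w p.2) =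
      weightedGenFun s v * weightedGenFun t w := by
  have := northcott_add s t
  ext n
  have sizes_mem_antidiagonal :
      ∀ p ∈ (finite_setOf_eq_of_northcott (fun p : α × β => s p.1 + t p.2) n).toFinset,
        (s p.1, t p.2) ∈ antidiagonal n := by simp
  rw [coeff_weightedGenFun, PowerSeries.coeff_mul,
    ← sum_fiberwise_of_maps_to sizes_mem_antidiagonal]
  refine sum_congr rfl fun q hq => ?_
  rw [coeff_weightedGenFun, coeff_weightedGenFun, sum_mul_sum, ← sum_product']
  refine sum_congr ?_ fun _ _ => rfl
  ext ⟨a, b⟩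
  have := mem_antidiagonal.1 hq
  simp only [mem_filter, Set.Finite.mem_toFinset, Set.mem_ofPred_eq, mem_product, Prod.ext_iff]
  lia

theorem weightedGenFun_pi (s : α → ℕ) [Northcott s] (w : α → R) (k : ℕ) :
    weightedGenFun (fun c : Fin k → α => ∑ i, s (c i)) (fun c => ∏ i, w (c i)) =
      weightedGenFun s w ^ k := by
  induction k with
  | zero =>
    ext n
    simp [weightedGenFun, PowerSeries.coeff_one, finsum_unique, finsum_eq_if, eq_comm]
  | succ k ih =>
    have := northcott_sum (ι := Fin k) s
    rw [pow_succ', ← ih, ← weightedGenFun_prod,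
      ← weightedGenFun_comp_equiv (Fin.consEquiv fun _ : Fin (k + 1) => α)]
    simp [Fin.consEquiv, Fin.sum_univ_succ, Fin.prod_univ_succ]

end WeightedGenFun

namespace MTree

variable {R : Type*} [CommSemiring R]

instance (m : ℕ) : Northcott (internals : MTree m → ℕ) where
  finite_le n := by
    induction n with
    | zero =>
      refine (Set.finite_singleton leaf).subset fun T hT => ?_
      cases T with
      | leaf => rfl
      | node c => simp [internals] at hT
    | succ n ih =>
      refine ((Set.finite_singleton leaf).union
        ((Set.Finite.pi fun _ : Fin m => ih).image node)).subset fun T hT => ?_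
      cases T with
      | leaf => exact Or.inl rfl
      | node c =>
        refine Or.inr ⟨c, fun i _ => ?_, rfl⟩
        have child_le : (c i).internals ≤ ∑ j, (c j).internals :=
          single_le_sum_of_canonicallyOrdered (f := fun j => (c j).internals) (mem_univ i)
        simp only [Set.mem_ofPred_eq, internals] at hT ⊢
        lia

/-- The generating function of complete `m`-ary trees by number of internal vertices, each tree
being weighted by the product of `f (𝓗_v)` over its internal vertices `v`. -/
noncomputable def hookSeries (m : ℕ) (f : ℕ → R) : R⟦X⟧ :=
  weightedGenFun (internals : MTree m → ℕ) (hookProd1 f)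

theorem hookSeries_eq_one_add_X_mul (m : ℕ) (f : ℕ → R) :
    hookSeries m f = 1 + PowerSeries.X *
      weightedGenFun (fun c : Fin m → MTree m => ∑ i, (c i).internals)
        (fun c => hookProd1 f (node c)) := by
  ext n
  cases n with
  | zero =>
    have internals_eq_zero : {T : MTree m | T.internals = 0} = {leaf} := by
      ext T; cases T <;> simp [internals]
    rw [hookSeries, weightedGenFun, PowerSeries.coeff_mk, internals_eq_zero, finsum_mem_singleton]
    simp [hookProd1]
  | succ n =>
    have node_bijOn : Set.BijOn node {c : Fin m → MTree m | ∑ i, (c i).internals = n}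
        {T | T.internals = n + 1} := by
      refine ⟨fun c hc => ?_, fun _ _ _ _ h => node.inj h, fun T hT => ?_⟩
      · simp only [Set.mem_ofPred_eq, internals] at hc ⊢
        lia
      · cases T with
        | leaf => simp [internals] at hT
        | node c =>
          refine ⟨c, ?_, rfl⟩
          simp only [Set.mem_ofPred_eq, internals] at hT ⊢
          lia
    simpa [hookSeries, weightedGenFun, PowerSeries.coeff_succ_X_mul, PowerSeries.coeff_one]
      using (finsum_mem_eq_of_bijOn node node_bijOn fun _ _ => rfl).symm

theorem hook1_snoc {k : ℕ} (c : Fin k → MTree (k + 1)) (T : MTree (k + 1)) :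
    hook1 (Fin.snoc c T : Fin (k + 1) → MTree (k + 1)) = ∑ i, (c i).internals + 1 := by
  simp [hook1, sum_filter, Fin.sum_univ_castSucc, add_comm]

theorem hookProd1_node_snoc {k : ℕ} (f : ℕ → R) (c : Fin k → MTree (k + 1)) (T : MTree (k + 1)) :
    hookProd1 f (node (Fin.snoc c T)) =
      f (∑ i, (c i).internals + 1) * (∏ i, hookProd1 f (c i)) * hookProd1 f T := by
  simp [hookProd1, hook1_snoc, Fin.prod_univ_castSucc, mul_assoc]

/-- Detaching the rightmost subtree of the root: the hook length of the root sees only the other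
`k` subtrees, so the root contributes a factor depending on the size of a `k`-tuple of trees. -/
theorem weightedGenFun_hookProd1_node (k : ℕ) (f : ℕ → R) :
    weightedGenFun (fun c : Fin (k + 1) → MTree (k + 1) => ∑ i, (c i).internals)
        (fun c => hookProd1 f (node c)) =
      (PowerSeries.mk fun n => f (n + 1) * PowerSeries.coeff n (hookSeries (k + 1) f ^ k)) *
        hookSeries (k + 1) f := by
  have := northcott_sum (ι := Fin k) (internals : MTree (k + 1) → ℕ)
  rw [hookSeries, ← weightedGenFun_pi, ← weightedGenFun_comp_size_mul _ (fun n => f (n + 1)),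
    ← weightedGenFun_prod, ← weightedGenFun_comp_equiv
      ((Equiv.prodComm _ _).trans (Fin.snocEquiv fun _ : Fin (k + 1) => MTree (k + 1)))]
  simp [Fin.snocEquiv, hookProd1_node_snoc, Fin.sum_univ_castSucc]

end MTree

section Derivation

variable {S A M : Type*} [CommSemiring S]

theorem derivation_add_nsmul_pow_smul_pow [CommSemiring A] [Algebra S A] [AddCommMonoid M]
    [Module A M] [Module S M] (D : Derivation S A M) (a : A) (p q : ℕ) :
    (p + q) • a ^ q • D (a ^ p) = p • D (a ^ (p + q)) := by
  cases p with
  | zero => simp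
  | succ p =>
    have exponent : p + 1 + q - 1 = q + p := by lia
    rw [D.leibniz_pow, D.leibniz_pow, exponent, Nat.add_sub_cancel, pow_add]
    module

theorem derivation_eq_sq_smul_of_eq_one_add_mul [CommRing A] [Algebra S A] [AddCommGroup M]
    [Module A M] [Module S M] (D : Derivation S A M) {a u : A} (h : a = 1 + u * a) :
    D a = a ^ 2 • D u := by
  have leibniz : D a = u • D a + a • D u := by
    conv_lhs => rw [h]
    simp
  calc D a = (a - u * a) • D a := by rw [sub_eq_of_eq_add h, one_smul]
    _ = a • (D a - u • D a) := by module
    _ = a ^ 2 • D u := by rw [sub_eq_of_eq_add' leibniz, sq, mul_smul]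

end Derivation

section DifferentialEquation

variable {R : Type*}

theorem coeff_X_mul_derivative [CommSemiring R] (F : R⟦X⟧) (n : ℕ) :
    PowerSeries.coeff n (PowerSeries.X * d⁄dX R F) = n * PowerSeries.coeff n F := by
  cases n with
  | zero => simp
  | succ n => rw [PowerSeries.coeff_succ_X_mul, PowerSeries.coeff_derivative]; push_cast; ring

variable [CommRing R]

theorem derivative_X_mul_of_coeff {x y : R} {A B : R⟦X⟧}
    (h : ∀ n : ℕ, (n + 1) * PowerSeries.coeff n B = (n * x + y) * PowerSeries.coeff n A) :
    d⁄dX R (PowerSeries.X * B) =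
      PowerSeries.C y * A + PowerSeries.C x * (PowerSeries.X * d⁄dX R A) := by
  ext n
  rw [PowerSeries.coeff_derivative, PowerSeries.coeff_succ_X_mul, map_add,
    PowerSeries.coeff_C_mul, PowerSeries.coeff_C_mul, coeff_X_mul_derivative]
  linear_combination h n

variable {x y : R} {k : ℕ} {G : R⟦X⟧}

theorem coeff_succ_pow_of_derivative_eq
    (hG : d⁄dX R G = G ^ 2 *
      (PowerSeries.C y * G ^ k + PowerSeries.C x * (PowerSeries.X * d⁄dX R (G ^ k))))
    (r n : ℕ) :
    (k + 1 + r) * ((n + 1) * PowerSeries.coeff (n + 1) (G ^ r)) =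
      r * ((k + 1 + r) * y + k * n * x) * PowerSeries.coeff n (G ^ (k + 1 + r)) := by
  cases r with
  | zero => simp [PowerSeries.coeff_one]
  | succ r =>
    have pow_deriv := derivation_add_nsmul_pow_smul_pow (d⁄dX R) G k (r + 2)
    have deriv_pow : PowerSeries.C ((k : R) + 1 + (r + 1)) * d⁄dX R (G ^ (r + 1)) =
        PowerSeries.C ((r + 1) * (k + 1 + (r + 1)) * y) * G ^ (k + 1 + (r + 1)) +
          PowerSeries.C ((r + 1) * k * x) *
            (PowerSeries.X * d⁄dX R (G ^ (k + 1 + (r + 1)))) := by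
      rw [show k + 1 + (r + 1) = k + (r + 2) by lia, PowerSeries.derivative_pow G (r + 1), hG]
      simp only [nsmul_eq_mul, smul_eq_mul, map_mul, map_add, map_natCast, map_one,
        Nat.add_sub_cancel] at pow_deriv ⊢
      push_cast at pow_deriv ⊢
      linear_combination (r + 1) * PowerSeries.C x * PowerSeries.X * pow_deriv
    have coeff_eq := congrArg (PowerSeries.coeff n) deriv_pow
    rw [map_add (PowerSeries.coeff n), PowerSeries.coeff_C_mul, PowerSeries.coeff_C_mul,
      PowerSeries.coeff_C_mul, coeff_X_mul_derivative, PowerSeries.coeff_derivative] at coeff_eq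
    push_cast at coeff_eq ⊢
    linear_combination coeff_eq

theorem factorial_mul_coeff_succ_pow_of_derivative_eq [IsAddTorsionFree R]
    (hG₀ : PowerSeries.constantCoeff G = 1)
    (hG : d⁄dX R G = G ^ 2 *
      (PowerSeries.C y * G ^ k + PowerSeries.C x * (PowerSeries.X * d⁄dX R (G ^ k))))
    (r n : ℕ) :
    (n + 1).factorial * PowerSeries.coeff (n + 1) (G ^ r) =
      r * y * ∏ i ∈ Icc 1 n, (((k + 1) * (n + 1) + r - i) * y - k * i * (y - x)) := by
  have cancel (r : ℕ) {a b : R} (h : (k + 1 + r) * a = (k + 1 + r) * b) : a = b :=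
    nsmul_right_injective (show k + 1 + r ≠ 0 by lia) (by simpa [nsmul_eq_mul] using h)
  induction n generalizing r with
  | zero =>
    have coeff_zero : PowerSeries.coeff 0 (G ^ (k + 1 + r)) = 1 := by simp [hG₀]
    have recurrence := coeff_succ_pow_of_derivative_eq hG r 0
    rw [coeff_zero] at recurrence
    apply cancel r
    simp only [Nat.cast_zero, zero_add, Nat.factorial_one, Nat.cast_one, Icc_eq_empty_of_lt,
      zero_lt_one, prod_empty] at recurrence ⊢
    linear_combination recurrence
  | succ n ih =>
    have recurrence := coeff_succ_pow_of_derivative_eq hG r (n + 1)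
    have shift : ∏ i ∈ Icc 1 n, (((k + 1) * ((n + 1 : ℕ) + 1) + r - i) * y - k * i * (y - x)) =
        ∏ i ∈ Icc 1 n,
          (((k + 1) * (n + 1) + (k + 1 + r : ℕ) - i) * y - k * i * (y - x)) :=
      prod_congr rfl fun i _ => by push_cast; ring
    apply cancel r
    rw [prod_Icc_succ_top (by lia), shift, Nat.factorial_succ]
    have ih_shift := ih (k + 1 + r)
    push_cast at recurrence ih_shift ⊢
    linear_combination ((n + 1).factorial : R) * recurrence +
      r * ((k + 1 + r) * y + k * (n + 1) * x) * ih_shift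

end DifferentialEquation

namespace MTree

variable {R : Type*} [CommRing R]

theorem derivative_hookSeries {f : ℕ → R} {x y : R}
    (hf : ∀ h : ℕ, (h + 1) * f (h + 1) = h * x + y) (k : ℕ) :
    d⁄dX R (hookSeries (k + 1) f) = hookSeries (k + 1) f ^ 2 *
      (PowerSeries.C y * hookSeries (k + 1) f ^ k +
        PowerSeries.C x * (PowerSeries.X * d⁄dX R (hookSeries (k + 1) f ^ k))) := by
  have functional_eq := hookSeries_eq_one_add_X_mul (k + 1) f
  rw [weightedGenFun_hookProd1_node, ← mul_assoc] at functional_eq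
  rw [derivation_eq_sq_smul_of_eq_one_add_mul _ functional_eq, smul_eq_mul,
    derivative_X_mul_of_coeff]
  intro n
  rw [PowerSeries.coeff_mk, ← mul_assoc, hf]

theorem factorial_mul_coeff_succ_hookSeries_pow [IsAddTorsionFree R] {f : ℕ → R} {x y : R}
    (hf : ∀ h : ℕ, (h + 1) * f (h + 1) = h * x + y) (k r n : ℕ) :
    (n + 1).factorial * PowerSeries.coeff (n + 1) (hookSeries (k + 1) f ^ r) =
      r * y * ∏ i ∈ Icc 1 n, (((k + 1) * (n + 1) + r - i) * y - k * i * (y - x)) :=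
  factorial_mul_coeff_succ_pow_of_derivative_eq
    (by rw [hookSeries_eq_one_add_X_mul]; simp) (derivative_hookSeries hf k) r n

end MTree

theorem hook_length_formula_first_kind_general {R : Type*} [CommRing R] [Algebra ℚ R] (x c : R)
    {m n : ℕ} (hm : 1 ≤ m) (hn : 1 ≤ n) :
    (∑ᶠ T ∈ {T : MTree m | T.internals = n},
        MTree.hookProd1 (fun h => x + algebraMap ℚ R (h : ℚ)⁻¹ * c) T)
      = algebraMap ℚ R (n.factorial : ℚ)⁻¹ * (x + c) *
          ∏ i ∈ Icc 1 (n - 1), (((m : R) * n + 1 - i) * (x + c) - ((m : R) - 1) * i * c) := by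
  obtain ⟨k, rfl⟩ := Nat.exists_eq_add_of_le' hm
  obtain ⟨n, rfl⟩ := Nat.exists_eq_add_of_le' hn
  have : IsAddTorsionFree R := .of_module_rat R
  have inv_natCast_mul (a : ℕ) (ha : a ≠ 0) : algebraMap ℚ R (a : ℚ)⁻¹ * a = 1 := by
    rw [← map_natCast (algebraMap ℚ R), ← map_mul, inv_mul_cancel₀ (by exact_mod_cast ha), map_one]
  have weight (h : ℕ) :
      (h + 1) * (x + algebraMap ℚ R ((h + 1 : ℕ) : ℚ)⁻¹ * c) = h * x + (x + c) := by
    have := inv_natCast_mul (h + 1) h.succ_ne_zero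
    push_cast at this ⊢
    linear_combination c * this
  have closed_form := MTree.factorial_mul_coeff_succ_hookSeries_pow
    (f := fun h => x + algebraMap ℚ R (h : ℚ)⁻¹ * c) weight k 1 n
  rw [pow_one, MTree.hookSeries, weightedGenFun, PowerSeries.coeff_mk] at closed_form
  calc
    _ = algebraMap ℚ R ((n + 1).factorial : ℚ)⁻¹ * ((n + 1).factorial *
          ∑ᶠ T ∈ {T : MTree (k + 1) | T.internals = n + 1},
            MTree.hookProd1 (fun h => x + algebraMap ℚ R (h : ℚ)⁻¹ * c) T) := by
      rw [← mul_assoc, inv_natCast_mul _ (n + 1).factorial_ne_zero, one_mul]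
    _ = _ := by
      rw [closed_form]
      simp [mul_assoc]

/-- **Theorem 1.1, first form (Sun–Zhang).**  For `m ≥ 2` and `n ≥ 1`,
`∑_{T ∈ 𝒯_{n,m}} ∏_{v ∈ 𝓘(T)} (x + 1/𝓗_v)
  = ((x+1)/n!) ∏_{i=1}^{n-1} ((mn+1-i)(x+1) - (m-1)i)` in `ℚ[x]`. -/
theorem hook_length_formula_first_kind (m n : ℕ) (hm : 2 ≤ m) (hn : 1 ≤ n) :
    (∑ᶠ T ∈ {T : MTree m | T.internals = n},
        MTree.hookProd1 (fun h => (X : ℚ[X]) + C ((h : ℚ)⁻¹)) T)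
      = C ((n.factorial : ℚ)⁻¹) * ((X : ℚ[X]) + 1) *
          ∏ i ∈ Finset.Icc 1 (n - 1),
            (C ((m : ℚ) * n + 1 - (i : ℚ)) * ((X : ℚ[X]) + 1) -
              C (((m : ℚ) - 1) * (i : ℚ))) := by
  simpa using hook_length_formula_first_kind_general (X : ℚ[X]) 1 (by lia : 1 ≤ m) hn
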